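/- Let (X,τ) be a topological space and 𝒫 a primal on X. The following three conditions are equivalent: (1) for every A ⊆ X, if A ∩ A⋄ = ∅ then A⋄ = ∅; (2) for every A ⊆ X, (A \ A⋄)⋄ = ∅; (3) for every A ⊆ X, (A ∩ A⋄)⋄ = A⋄. Moreover, if τ is suitable for 𝒫, then these conditions hold. -/

import Mathlib

open Set

/-- A collection `P` of subsets of `X` is a *primal* on `X`. -/
structure IsSetPrimal {X : Type*} (P : Set (Set X)) : Prop where
  univ_not_mem : Set.univ ∉ P
  mem_of_subset : ∀ {A B : Set X}, A ∈ P → B ⊆ A → B ∈ P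
  mem_or_mem_of_inter_mem : ∀ {A B : Set X}, A ∩ B ∈ P → A ∈ P ∨ B ∈ P

/-- The primal-diamond operator: `A⋄ = {x | ∀ open U ∋ x, Aᶜ ∪ Uᶜ ∈ P}`. -/
def primalDiamond {X : Type*} [TopologicalSpace X] (P : Set (Set X)) (A : Set X) : Set X :=
  {x | ∀ U : Set X, IsOpen U → x ∈ U → Aᶜ ∪ Uᶜ ∈ P}

/-- The `Ψ` operator: `Ψ(A) = {x | ∃ open U ∋ x, (U \ A)ᶜ ∉ P}`. -/
def primalPsi {X : Type*} [TopologicalSpace X] (P : Set (Set X)) (A : Set X) : Set X :=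
  {x | ∃ U : Set X, IsOpen U ∧ x ∈ U ∧ (U \ A)ᶜ ∉ P}

/-- The topology is *suitable* for the primal `P` if `Aᶜ ∪ A⋄ ∉ P` for all `A`. -/
def SuitableForPrimal {X : Type*} [TopologicalSpace X] (P : Set (Set X)) : Prop :=
  ∀ A : Set X, Aᶜ ∪ primalDiamond P A ∉ P

theorem primalDiamond_mono {X : Type*} [TopologicalSpace X] {P : Set (Set X)}
    (hP : IsSetPrimal P) {A B : Set X} (hAB : A ⊆ B) :
    primalDiamond P A ⊆ primalDiamond P B := fun _ hx U hU hxU =>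
  hP.mem_of_subset (hx U hU hxU) (union_subset_union_left _ (compl_subset_compl.2 hAB))

theorem primalDiamond_empty {X : Type*} [TopologicalSpace X] {P : Set (Set X)}
    (hP : IsSetPrimal P) : primalDiamond P ∅ = ∅ :=
  eq_empty_of_forall_notMem fun x hx =>
    hP.univ_not_mem (by simpa using hx univ isOpen_univ (mem_univ x))

theorem primalDiamond_union_subset {X : Type*} [TopologicalSpace X] {P : Set (Set X)}
    (hP : IsSetPrimal P) (A B : Set X) :
    primalDiamond P (A ∪ B) ⊆ primalDiamond P A ∪ primalDiamond P B := by
  intro x hx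
  by_contra h
  simp only [primalDiamond, mem_union, mem_ofPred_eq, not_or, not_forall] at h
  obtain ⟨⟨U, hU, hxU, hAU⟩, V, hV, hxV, hBV⟩ := h
  have hmem := hx (U ∩ V) (hU.inter hV) ⟨hxU, hxV⟩
  have hsub : (Aᶜ ∪ Uᶜ) ∩ (Bᶜ ∪ Vᶜ) ⊆ (A ∪ B)ᶜ ∪ (U ∩ V)ᶜ := by
    intro y
    simp only [mem_inter_iff, mem_union, mem_compl_iff]
    tauto
  exact (hP.mem_or_mem_of_inter_mem (hP.mem_of_subset hmem hsub)).elim hAU hBV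

theorem stmt_16 {X : Type*} [TopologicalSpace X] (P : Set (Set X)) (hP : IsSetPrimal P) :
    List.TFAE
      [ ∀ A : Set X, A ∩ primalDiamond P A = ∅ → primalDiamond P A = ∅,
        ∀ A : Set X, primalDiamond P (A \ primalDiamond P A) = ∅,
        ∀ A : Set X, primalDiamond P (A ∩ primalDiamond P A) = primalDiamond P A ] ∧
    (SuitableForPrimal P →
      ∀ A : Set X, A ∩ primalDiamond P A = ∅ → primalDiamond P A = ∅) := by
  refine ⟨?_, fun hS A hA => ?_⟩
  · tfae_have 1 → 2 := fun h A => h _ <| eq_empty_of_forall_notMem fun _ hx =>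
      hx.1.2 (primalDiamond_mono hP sdiff_subset hx.2)
    tfae_have 2 → 3 := fun h A => by
      refine (primalDiamond_mono hP inter_subset_left).antisymm fun x hx => ?_
      rw [← sdiff_union_inter A (primalDiamond P A)] at hx
      have hx' := primalDiamond_union_subset hP _ _ hx
      rw [h A, empty_union] at hx'
      exact hx'
    tfae_have 3 → 1 := fun h A hA => by rw [← h A, hA, primalDiamond_empty hP]
    tfae_finish
  · refine eq_empty_of_forall_notMem fun x hx => hS A ?_
    have hsub : primalDiamond P A ⊆ Aᶜ := fun y hy hyA => hA.subset ⟨hyA, hy⟩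
    rw [union_eq_left.2 hsub]
    simpa using hx univ isOpen_univ (mem_univ x)
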